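/- For every m ≥ 3, the set of all vectors in {0,1,2}^m with exactly three nonzero coordinates whose nonzero values, read in increasing order of position, are 1, 2, 1, is an I(m, 3) admissible set. -/

import Mathlib

/-!
Two different supports of size three are never nested, so a clash can only come from three vectors.

Let three distinct 1-2-1 vectors `v₁, v₂, v₃` form a clash, and compare the positions of their
entries `2`. If the entry `2` of one of them sits at a position where neither of the others has a
`2`, then both others have a `1` there (`Clash3.eq_one_of_two`).
* The three positions are pairwise distinct: then the middle position of each vector has those of
  the other two as its outer positions, so each of the three positions lies strictly between the
  other two, which is absurd (`not_clash3_of_middle_ne`).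
* Exactly two coincide, say those of `v₁` and `v₂`: then `v₁` and `v₂` share one outer position,
  namely that of the `2` of `v₃`. The other outer positions of `v₁` and `v₂` are distinct and lie
  on the same side of it, so they are both outer positions of `v₃`, on the same side of the middle
  one (`not_clash3_of_middle_eq_ne`).
* All three coincide: if the first positions of `v₁` and `v₂` differed, each would have to be
  covered by `v₃`, which has only one position before the common middle. So they agree, likewise
  the last ones, and `v₁ = v₂` (`not_clash3_of_middle_eq`).
-/

/-- The support of a vector `v ∈ {0,1,2}^m`: the set of coordinates where `v` is nonzero. -/
def Supp {m : ℕ} (v : Fin m → Fin 3) : Finset (Fin m) :=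
  Finset.univ.filter (fun i => v i ≠ 0)

/-- Exactly one of the three values `a`, `b`, `c` is nonzero. -/
def ExactlyOneNonzero (a b c : Fin 3) : Prop :=
  (a ≠ 0 ∧ b = 0 ∧ c = 0) ∨ (a = 0 ∧ b ≠ 0 ∧ c = 0) ∨ (a = 0 ∧ b = 0 ∧ c ≠ 0)

/-- Two vectors form a clash if the support of one is contained in the support of the other. -/
def Clash2 {m : ℕ} (v₁ v₂ : Fin m → Fin 3) : Prop :=
  Supp v₁ ⊆ Supp v₂ ∨ Supp v₂ ⊆ Supp v₁

/-- Three vectors form a clash if there is no coordinate at which exactly one of them is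
nonzero and no coordinate at which the three values are pairwise distinct. -/
def Clash3 {m : ℕ} (v₁ v₂ v₃ : Fin m → Fin 3) : Prop :=
  (¬ ∃ i, ExactlyOneNonzero (v₁ i) (v₂ i) (v₃ i)) ∧
  (¬ ∃ i, v₁ i ≠ v₂ i ∧ v₁ i ≠ v₃ i ∧ v₂ i ≠ v₃ i)

/-- A set of vectors is admissible if no two and no three of its elements form a clash. -/
def IsAdmissible {m : ℕ} (A : Set (Fin m → Fin 3)) : Prop :=
  (∀ v₁ ∈ A, ∀ v₂ ∈ A, v₁ ≠ v₂ → ¬ Clash2 v₁ v₂) ∧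
  (∀ v₁ ∈ A, ∀ v₂ ∈ A, ∀ v₃ ∈ A, v₁ ≠ v₂ → v₁ ≠ v₃ → v₂ ≠ v₃ → ¬ Clash3 v₁ v₂ v₃)

/-- `A` is an `I(m,w)` set: for every `w`-element subset `S` of `[m]` it contains exactly one
vector with support `S`, and it contains no other vectors. -/
def IsISet (m w : ℕ) (A : Set (Fin m → Fin 3)) : Prop :=
  (∀ S : Finset (Fin m), S.card = w → ∃! v, v ∈ A ∧ Supp v = S) ∧
  (∀ v ∈ A, (Supp v).card = w)

/-- The list of nonzero values of `v`, read in increasing order of position. -/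
def nonzeroValues {m : ℕ} (v : Fin m → Fin 3) : List (Fin 3) :=
  ((Supp v).sort (· ≤ ·)).map v

/-- `v` is of type `t` if `v` has at least `t.length` nonzero coordinates and the `i`-th
nonzero value of `v` (in increasing order of position) is `t i`, i.e. `t` is a prefix of the
list of nonzero values of `v`. -/
def IsOfType {m : ℕ} (v : Fin m → Fin 3) (t : List (Fin 3)) : Prop :=
  t <+: nonzeroValues v

/-- `S₁, S₂, S₃` form a type `t` clash: whenever `v₁, v₂, v₃` have supports `S₁, S₂, S₃`
respectively and are all of type `t`, they form a clash. -/
def TypedClash {m : ℕ} (t : List (Fin 3)) (S₁ S₂ S₃ : Finset (Fin m)) : Prop :=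
  ∀ v₁ v₂ v₃ : Fin m → Fin 3, Supp v₁ = S₁ → Supp v₂ = S₂ → Supp v₃ = S₃ →
    IsOfType v₁ t → IsOfType v₂ t → IsOfType v₃ t → Clash3 v₁ v₂ v₃

/-- `v` has the values `1, 2, 1` at the positions `a < b < c` and vanishes elsewhere. The two
equivalences determine `v`, as its values lie in `Fin 3`. -/
structure Is121 {m : ℕ} (v : Fin m → Fin 3) (a b c : Fin m) : Prop where
  ab : a < b
  bc : b < c
  one : ∀ i, v i = 1 ↔ i = a ∨ i = c
  two : ∀ i, v i = 2 ↔ i = b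

lemma fin3_cases (x : Fin 3) : x = 0 ∨ x = 1 ∨ x = 2 := by
  revert x; decide

lemma mem_Supp {m : ℕ} (v : Fin m → Fin 3) (i : Fin m) : i ∈ Supp v ↔ v i ≠ 0 := by
  simp [Supp]

lemma card_Supp {m : ℕ} {v : Fin m → Fin 3} (h : nonzeroValues v = [1, 2, 1]) :
    (Supp v).card = 3 := by
  have := congrArg List.length h
  simpa [nonzeroValues] using this

lemma exists_sort {m : ℕ} {S : Finset (Fin m)} (h : S.card = 3) :
    ∃ a b c, S.sort (· ≤ ·) = [a, b, c] ∧ a < b ∧ b < c ∧ ∀ i, i ∈ S ↔ i = a ∨ i = b ∨ i = c := by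
  have hl : (S.sort (· ≤ ·)).length = 3 := by simpa using h
  obtain ⟨a, b, c, e⟩ := List.length_eq_three.1 hl
  have hs : (S.sort (· ≤ ·)).Pairwise (· < ·) := (Finset.sortedLT_sort S).pairwise
  rw [e] at hs
  simp only [List.pairwise_cons, List.mem_cons] at hs
  refine ⟨a, b, c, e, hs.1 b (by simp), hs.2.1 c (by simp), fun i => ?_⟩
  rw [← Finset.mem_sort (· ≤ ·), e]
  simp

lemma is121_of_sort {m : ℕ} {v : Fin m → Fin 3} {a b c : Fin m} (h : nonzeroValues v = [1, 2, 1])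
    (e : (Supp v).sort (· ≤ ·) = [a, b, c]) (hab : a < b) (hbc : b < c)
    (hS : ∀ i, i ∈ Supp v ↔ i = a ∨ i = b ∨ i = c) : Is121 v a b c := by
  simp only [nonzeroValues, e, List.map_cons, List.map_nil, List.cons.injEq, and_true] at h
  simp only [mem_Supp] at hS
  refine ⟨hab, hbc, fun i => ?_, fun i => ?_⟩ <;> grind

lemma exists_is121 {m : ℕ} {v : Fin m → Fin 3} (h : nonzeroValues v = [1, 2, 1]) :
    ∃ a b c, Is121 v a b c := by
  obtain ⟨a, b, c, e, hab, hbc, hS⟩ := exists_sort (card_Supp h)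
  exact ⟨a, b, c, is121_of_sort h e hab hbc hS⟩

lemma Is121.ext {m : ℕ} {v w : Fin m → Fin 3} {a b c : Fin m} (hv : Is121 v a b c)
    (hw : Is121 w a b c) : v = w := by
  funext i
  have h1 := (hv.one i).trans (hw.one i).symm
  have h2 := (hv.two i).trans (hw.two i).symm
  rcases fin3_cases (v i) with h | h | h <;> rcases fin3_cases (w i) with h' | h' | h' <;>
    simp_all

lemma isISet_121 (m : ℕ) : IsISet m 3 {v : Fin m → Fin 3 | nonzeroValues v = [1, 2, 1]} := by
  refine ⟨fun S hS => ?_, fun v hv => card_Supp hv⟩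
  obtain ⟨a, b, c, e, hab, hbc, hm⟩ := exists_sort hS
  have hsupp : Supp (fun i => if i = b then 2 else if i ∈ S then (1 : Fin 3) else 0) = S := by
    ext i
    rw [mem_Supp]
    grind
  refine ⟨fun i => if i = b then 2 else if i ∈ S then 1 else 0, ⟨?_, hsupp⟩, ?_⟩
  · simp only [Set.mem_ofPred_eq, nonzeroValues, hsupp, e]
    simp [hm, hab.ne, hbc.ne']
  · rintro w ⟨hw, rfl⟩
    have h := is121_of_sort hw e hab hbc hm
    funext i
    have h1 := h.one i
    have h2 := h.two i
    have h3 := mem_Supp w i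
    rcases fin3_cases (w i) with h' | h' | h' <;> grind

section Clash

variable {m : ℕ} {u v w : Fin m → Fin 3} {a b c a' b' c' a'' b'' c'' : Fin m}

lemma Clash3.swap (h : Clash3 u v w) : Clash3 v u w := by
  simp only [Clash3, ExactlyOneNonzero] at *
  grind

lemma Clash3.rotate (h : Clash3 u v w) : Clash3 v w u := by
  simp only [Clash3, ExactlyOneNonzero] at *
  grind

lemma Clash3.eq_one_of_two (h : Clash3 u v w) {i : Fin m} (hu : u i = 2) (hv : v i ≠ 2)
    (hw : w i ≠ 2) : v i = 1 ∧ w i = 1 := by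
  obtain ⟨h1, h2⟩ := h
  have h1 := fun q => h1 ⟨i, q⟩
  have h2 := fun q => h2 ⟨i, q⟩
  unfold ExactlyOneNonzero at h1
  generalize u i = x at *
  generalize v i = y at *
  generalize w i = z at *
  revert x y z
  decide

lemma Clash3.eq_one_of_one_zero (h : Clash3 u v w) {i : Fin m} (hu : u i = 1) (hv : v i = 0) :
    w i = 1 := by
  obtain ⟨h1, h2⟩ := h
  have h1 := fun q => h1 ⟨i, q⟩
  have h2 := fun q => h2 ⟨i, q⟩
  unfold ExactlyOneNonzero at h1
  generalize u i = x at *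
  generalize v i = y at *
  generalize w i = z at *
  revert x y z
  decide

lemma Is121.eq_zero (h : Is121 u a b c) {i : Fin m} (ha : i ≠ a) (hb : i ≠ b) (hc : i ≠ c) :
    u i = 0 := by
  have := h.one i
  have := h.two i
  rcases fin3_cases (u i) with h' | h' | h' <;> grind

lemma not_clash3_of_middle_ne (hu : Is121 u a b c) (hv : Is121 v a' b' c')
    (hw : Is121 w a'' b'' c'') (h12 : b ≠ b') (h13 : b ≠ b'') (h23 : b' ≠ b'') :
    ¬ Clash3 u v w := by
  intro h
  have k1 := h.eq_one_of_two ((hu.two b).2 rfl) (by grind [hv.two b]) (by grind [hw.two b])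
  have k2 := h.rotate.eq_one_of_two ((hv.two b').2 rfl) (by grind [hw.two b'])
    (by grind [hu.two b'])
  have k3 := h.rotate.rotate.eq_one_of_two ((hw.two b'').2 rfl) (by grind [hu.two b''])
    (by grind [hv.two b''])
  have := hu.ab
  have := hu.bc
  have := hv.ab
  have := hv.bc
  have := hw.ab
  have := hw.bc
  -- Each of the three middle positions lies strictly between the other two.
  rw [hv.one, hw.one] at k1
  rw [hw.one, hu.one] at k2
  rw [hu.one, hv.one] at k3
  grind

lemma not_clash3_of_middle_eq_ne (huv : u ≠ v) (hu : Is121 u a b c) (hv : Is121 v a' b c')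
    (hw : Is121 w a'' b'' c'') (hb : b ≠ b'') : ¬ Clash3 u v w := by
  intro h
  have k := h.rotate.rotate.eq_one_of_two ((hw.two b'').2 rfl) (by grind [hu.two b''])
    (by grind [hv.two b''])
  rw [hu.one, hv.one] at k
  have := hu.ab
  have := hu.bc
  have := hv.ab
  have := hv.bc
  have := hw.ab
  have := hw.bc
  by_cases e : a = a'
  · subst e
    have hc : c ≠ c' := fun e => huv (hu.ext (e ▸ hv))
    have k1 := h.eq_one_of_one_zero ((hu.one c).2 (.inr rfl))
      (hv.eq_zero (by grind) (by grind) (by grind))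
    have k2 := h.swap.eq_one_of_one_zero ((hv.one c').2 (.inr rfl))
      (hu.eq_zero (by grind) (by grind) (by grind))
    rw [hw.one] at k1 k2
    grind
  · have k1 := h.eq_one_of_one_zero ((hu.one a).2 (.inl rfl))
      (hv.eq_zero (by grind) (by grind) (by grind))
    have k2 := h.swap.eq_one_of_one_zero ((hv.one a').2 (.inl rfl))
      (hu.eq_zero (by grind) (by grind) (by grind))
    rw [hw.one] at k1 k2
    grind

/-- The middle positions agree. If the first positions of `u` and `v` differed, that of `w` would
have to equal both; the same holds for the last positions. -/
lemma Clash3.outer_eq (hu : Is121 u a b c) (hv : Is121 v a' b c')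
    (hw : Is121 w a'' b c'') (h : Clash3 u v w) : a = a' ∧ c = c' := by
  have := hu.ab
  have := hu.bc
  have := hv.ab
  have := hv.bc
  have := hw.ab
  have := hw.bc
  constructor
  · by_contra e
    have k1 := h.eq_one_of_one_zero ((hu.one a).2 (.inl rfl))
      (hv.eq_zero (by grind) (by grind) (by grind))
    have k2 := h.swap.eq_one_of_one_zero ((hv.one a').2 (.inl rfl))
      (hu.eq_zero (by grind) (by grind) (by grind))
    rw [hw.one] at k1 k2
    grind
  · by_contra e
    have k1 := h.eq_one_of_one_zero ((hu.one c).2 (.inr rfl))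
      (hv.eq_zero (by grind) (by grind) (by grind))
    have k2 := h.swap.eq_one_of_one_zero ((hv.one c').2 (.inr rfl))
      (hu.eq_zero (by grind) (by grind) (by grind))
    rw [hw.one] at k1 k2
    grind

lemma not_clash3_of_middle_eq (huv : u ≠ v) (hu : Is121 u a b c) (hv : Is121 v a' b c')
    (hw : Is121 w a'' b c'') : ¬ Clash3 u v w := by
  intro h
  obtain ⟨rfl, rfl⟩ := h.outer_eq hu hv hw
  exact huv (hu.ext hv)

end Clash

/-- For every `m ≥ 3`, the set of all vectors in `{0,1,2}^m` whose nonzero values, read in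
increasing order of position, are `1, 2, 1` is an `I(m, 3)` admissible set. -/
theorem type121_is_Im3 {m : ℕ} (hm : 3 ≤ m) :
    IsISet m 3 {v : Fin m → Fin 3 | nonzeroValues v = [1, 2, 1]} ∧
    IsAdmissible {v : Fin m → Fin 3 | nonzeroValues v = [1, 2, 1]} := by
  refine ⟨isISet_121 m, fun u hu v hv huv h => huv ?_, fun u hu v hv w hw huv huw hvw h => ?_⟩
  · have hS : Supp u = Supp v := by
      rcases h with h | h
      · exact Finset.eq_of_subset_of_card_le h (by rw [card_Supp hu, card_Supp hv])
      · exact (Finset.eq_of_subset_of_card_le h (by rw [card_Supp hu, card_Supp hv])).symm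
    exact ((isISet_121 m).1 _ (card_Supp hv)).unique ⟨hu, hS⟩ ⟨hv, rfl⟩
  · obtain ⟨a, b, c, hu⟩ := exists_is121 hu
    obtain ⟨a', b', c', hv⟩ := exists_is121 hv
    obtain ⟨a'', b'', c'', hw⟩ := exists_is121 hw
    by_cases h12 : b = b'
    · subst h12
      by_cases h13 : b = b''
      · subst h13
        exact not_clash3_of_middle_eq huv hu hv hw h
      · exact not_clash3_of_middle_eq_ne huv hu hv hw h13 h
    · by_cases h13 : b = b''
      · subst h13
        exact not_clash3_of_middle_eq_ne huw.symm hw hu hv h12 h.rotate.rotate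
      · by_cases h23 : b' = b''
        · subst h23
          exact not_clash3_of_middle_eq_ne hvw hv hw hu (Ne.symm h12) h.rotate
        · exact not_clash3_of_middle_ne hu hv hw h12 h13 h23 h
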